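/- The transformation φ1 makes the second Hamiltonian polynomial as well: fix t, s ∈ ℂ with t, s ∉ {0,1} and t ≠ s; then there exists a polynomial P in four variables with complex coefficients such that for all complex (Q1,P1,Q2,P2) with Q1 ≠ 0, Q2 ∉ {0,1,t,s} and Q2 + 1/Q1 ∉ {0,1,t,s}, one has H2(ψ(Q1,P1,Q2,P2), t, s) = P(Q1,P1,Q2,P2). -/

import Mathlib

/-- The quadratic form `B(q,p)` appearing in the Garnier Hamiltonian, with
`κ = ((κ0+κ1+θ1+θ2-1)² - κ∞²)/4`. -/
noncomputable def garnierB (κ0 κ1 κinf θ1 θ2 t s q p : ℂ) : ℂ :=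
  p ^ 2 + (((κ0 + κ1 + θ1 + θ2 - 1) ^ 2 - κinf ^ 2) / 4) / (q * (q - 1)) -
    ((θ1 - 1) / (q - t) + θ2 / (q - s) + κ0 / q + κ1 / (q - 1)) * p

/-- The Hamiltonian `H1` of the Garnier system in two variables. -/
noncomputable def garnierH1 (κ0 κ1 κinf θ1 θ2 q1 p1 q2 p2 t s : ℂ) : ℂ :=
  -(q1 * (q1 - 1) * (q1 - t) * (q1 - s) * (q2 - t)) /
      ((q1 - q2) * t * (t - 1) * (t - s)) *
      garnierB κ0 κ1 κinf θ1 θ2 t s q1 p1 -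
    (q2 * (q2 - 1) * (q2 - t) * (q2 - s) * (q1 - t)) /
      ((q2 - q1) * t * (t - 1) * (t - s)) *
      garnierB κ0 κ1 κinf θ1 θ2 t s q2 p2

/-- The inverse ψ of the symplectic transformation φ1, written componentwise:
`ψ(Q1,P1,Q2,P2) = (Q2 + 1/Q1, Q1(c - P1·Q1), Q2, P2 - Q1(c - P1·Q1))`. -/
noncomputable def psi (c : ℂ) : ℂ × ℂ × ℂ × ℂ → ℂ × ℂ × ℂ × ℂ :=
  fun (Q1, P1, Q2, P2) =>
    (Q2 + 1 / Q1, Q1 * (c - P1 * Q1), Q2, P2 - Q1 * (c - P1 * Q1))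

/-- `H1` evaluated on a tuple of canonical variables. -/
noncomputable def garnierH1' (κ0 κ1 κinf θ1 θ2 : ℂ) (v : ℂ × ℂ × ℂ × ℂ)
    (t s : ℂ) : ℂ :=
  garnierH1 κ0 κ1 κinf θ1 θ2 v.1 v.2.1 v.2.2.1 v.2.2.2 t s

/-- The second Hamiltonian `H2 = π(H1)` of the Garnier system in two variables. -/
noncomputable def garnierH2' (κ0 κ1 κinf θ1 θ2 : ℂ) (v : ℂ × ℂ × ℂ × ℂ)
    (t s : ℂ) : ℂ :=
  garnierH1 κ0 κ1 κinf θ2 θ1 v.2.2.1 v.2.2.2 v.1 v.2.1 s t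

/-!
Multiplying `B(q, p)` by `q (q - 1) (q - t) (q - s)` gives `N(q, p) = F(q) p² - G(q) p + E(q)` with
`F`, `G`, `E` polynomials whose coefficients in degrees 4, 3, 2 are `1`, `σ = κ0 + κ1 + θ1 + θ2 - 1`
and `κ`. In the variables `(x, y, a, b) = (Q1, P1, Q2, P2)` the only term of the Hamiltonian that is
not visibly polynomial is a multiple of `x N(a + 1/x, x w)` with `w = c - y x`. Its singular part at
`x = 0` is `(w² - σ w + κ) / x`. Since `κ = c (σ - c)`, the numerator is divisible by
`w - c = -y x`, and the pole cancels.
-/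

section Inversion

open Finset Polynomial

section Taylor

variable {R A B : Type*} [CommSemiring R] [CommSemiring A] [Algebra R A] [CommSemiring B]
  [Algebra R B]

theorem eval_hasseDeriv_of_natDegree_le {f : R[X]} {n : ℕ} (hf : f.natDegree ≤ n) (a : R) :
    (hasseDeriv n f).eval a = f.coeff n := by
  rw [← taylor_coeff]
  obtain rfl | hlt := hf.eq_or_lt
  · exact coeff_taylor_natDegree a f
  · rw [coeff_eq_zero_of_natDegree_lt hlt,
      coeff_eq_zero_of_natDegree_lt (by rwa [natDegree_taylor])]

theorem eval_add_eq_sum_hasseDeriv {f : R[X]} {n : ℕ} (hf : f.natDegree < n) (a h : R) :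
    f.eval (a + h) = ∑ i ∈ range n, (hasseDeriv i f).eval a * h ^ i := by
  rw [add_comm, ← taylor_eval, eval_eq_sum_range' (by rwa [natDegree_taylor])]
  simp only [taylor_coeff]

/-- The part of `x ^ n * f (a + x⁻¹)` without a pole at `x = 0`, for `f` of degree at most `n + 1`.
Here and below, expressions take values in an arbitrary algebra, so that the same formula gives
both a polynomial (at the variables) and its values (at scalars). -/
noncomputable def inversionRegularPart (n : ℕ) (f : R[X]) (a x : A) : A :=
  ∑ i ∈ range (n + 1), aeval a (hasseDeriv i f) * x ^ (n - i)

theorem map_inversionRegularPart (φ : A →ₐ[R] B) (n : ℕ) (f : R[X]) (a x : A) :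
    φ (inversionRegularPart n f a x) = inversionRegularPart n f (φ a) (φ x) := by
  simp only [inversionRegularPart, map_sum, map_mul, map_pow, aeval_algHom_apply]

end Taylor

section Algebra

variable {R A B : Type*} [CommRing R] [CommRing A] [Algebra R A] [CommRing B] [Algebra R B]

/-- The quadratic polynomial `F(q) p² - G(q) p + E(q)` in the momentum `p`. -/
noncomputable def momentumQuadratic (F G E : R[X]) (q p : A) : A :=
  aeval q F * p ^ 2 - aeval q G * p + aeval q E

/-- The polynomial in `a`, `x`, `y` to which `x ^ n * N(a + x⁻¹, x * (c - y * x))` extends, where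
`N = momentumQuadratic F G E` and `F`, `G`, `E` have degrees at most `n + 3`, `n + 2`, `n + 1`. The
first two summands are what the cancelled simple pole leaves behind. -/
noncomputable def regularizedQuadratic (n : ℕ) (F G E : R[X]) (c : R) (a x y : A) : A :=
  (G.coeff (n + 2) - 2 * c * F.coeff (n + 3)) • y + F.coeff (n + 3) • (x * y ^ 2) +
    (algebraMap R A c - y * x) ^ 2 * inversionRegularPart (n + 2) F a x -
    (algebraMap R A c - y * x) * inversionRegularPart (n + 1) G a x +
    inversionRegularPart n E a x

theorem map_momentumQuadratic (φ : A →ₐ[R] B) (F G E : R[X]) (q p : A) :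
    φ (momentumQuadratic F G E q p) = momentumQuadratic F G E (φ q) (φ p) := by
  simp only [momentumQuadratic, map_add, map_sub, map_mul, map_pow, aeval_algHom_apply]

theorem map_regularizedQuadratic (φ : A →ₐ[R] B) (n : ℕ) (F G E : R[X]) (c : R) (a x y : A) :
    φ (regularizedQuadratic n F G E c a x y) =
      regularizedQuadratic n F G E c (φ a) (φ x) (φ y) := by
  simp only [regularizedQuadratic, map_add, map_sub, map_mul, map_pow, map_smul,
    AlgHom.commutes, map_inversionRegularPart]

end Algebra

section Field

variable {K : Type*} [Field K]

theorem pow_mul_eval_add_inv {f : K[X]} {n : ℕ} (hf : f.natDegree ≤ n + 1) (a : K) {x : K}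
    (hx : x ≠ 0) :
    x ^ n * f.eval (a + x⁻¹) = f.coeff (n + 1) * x⁻¹ + inversionRegularPart n f a x := by
  have hpole : x ^ n * (f.coeff (n + 1) * x⁻¹ ^ (n + 1)) = f.coeff (n + 1) * x⁻¹ := by
    rw [inv_pow]
    field_simp
    ring
  have hregular : x ^ n * ∑ i ∈ range (n + 1), (hasseDeriv i f).eval a * x⁻¹ ^ i =
      inversionRegularPart n f a x := by
    rw [inversionRegularPart, mul_sum]
    refine sum_congr rfl fun i hi => ?_
    rw [coe_aeval_eq_eval, pow_sub₀ x hx (mem_range_succ_iff.mp hi), inv_pow]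
    ring
  rw [eval_add_eq_sum_hasseDeriv (Nat.lt_succ_of_le hf), sum_range_succ,
    eval_hasseDeriv_of_natDegree_le hf, mul_add, hpole, hregular, add_comm]

theorem pow_mul_momentumQuadratic_add_inv {n : ℕ} {F G E : K[X]} {c : K}
    (hF : F.natDegree ≤ n + 3) (hG : G.natDegree ≤ n + 2) (hE : E.natDegree ≤ n + 1)
    (hc : F.coeff (n + 3) * c ^ 2 - G.coeff (n + 2) * c + E.coeff (n + 1) = 0)
    (a y : K) {x : K} (hx : x ≠ 0) :
    x ^ n * momentumQuadratic F G E (a + x⁻¹) (x * (c - y * x)) =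
      regularizedQuadratic n F G E c a x y := by
  have hpole : (F.coeff (n + 3) * (c - y * x) ^ 2 - G.coeff (n + 2) * (c - y * x) +
      E.coeff (n + 1)) * x⁻¹ =
      (G.coeff (n + 2) - 2 * c * F.coeff (n + 3)) * y + F.coeff (n + 3) * (x * y ^ 2) := by
    linear_combination x⁻¹ * hc +
      (G.coeff (n + 2) - 2 * c * F.coeff (n + 3) + F.coeff (n + 3) * (x * y)) * y *
        mul_inv_cancel₀ hx
  simp only [momentumQuadratic, regularizedQuadratic, coe_aeval_eq_eval, smul_eq_mul,
    Algebra.algebraMap_self, RingHom.id_apply]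
  linear_combination (c - y * x) ^ 2 * pow_mul_eval_add_inv hF a hx -
    (c - y * x) * pow_mul_eval_add_inv hG a hx + pow_mul_eval_add_inv hE a hx + hpole

end Field

end Inversion

section Garnier

open Polynomial

/-- The polynomial `q (q - 1) (q - t) (q - s)` that clears the denominators of `B(q, p)`. -/
noncomputable def garnierQuartic (t s : ℂ) : ℂ[X] :=
  X * (X - 1) * (X - C t) * (X - C s)

/-- Minus the coefficient of `p` in `q (q - 1) (q - t) (q - s) B(q, p)`. -/
noncomputable def garnierCubic (κ0 κ1 θ1 θ2 t s : ℂ) : ℂ[X] :=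
  C (θ1 - 1) * (X * (X - 1) * (X - C s)) + C θ2 * (X * (X - 1) * (X - C t)) +
    C κ0 * ((X - 1) * (X - C t) * (X - C s)) + C κ1 * (X * (X - C t) * (X - C s))

/-- The constant coefficient in `p` of `q (q - 1) (q - t) (q - s) B(q, p)`. -/
noncomputable def garnierQuadratic (κ0 κ1 κinf θ1 θ2 t s : ℂ) : ℂ[X] :=
  C (((κ0 + κ1 + θ1 + θ2 - 1) ^ 2 - κinf ^ 2) / 4) * ((X - C t) * (X - C s))

/-- The numerator `q (q - 1) (q - t) (q - s) B(q, p)`, as a polynomial in `q` and `p`. -/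
noncomputable def garnierNumerator {A : Type*} [CommRing A] [Algebra ℂ A]
    (κ0 κ1 κinf θ1 θ2 t s : ℂ) (q p : A) : A :=
  momentumQuadratic (garnierQuartic t s) (garnierCubic κ0 κ1 θ1 θ2 t s)
    (garnierQuadratic κ0 κ1 κinf θ1 θ2 t s) q p

/-- The polynomial extending `H1` at `(q1, p1, q2, p2) = (a, b - x w, a + 1/x, x w)`, where
`w = c - y x`. As `H1` is symmetric in the two pairs of variables, this point is `ψ(x, y, a, b)` up
to the order of the pairs. -/
noncomputable def garnierPsiHamiltonian {A : Type*} [CommRing A] [Algebra ℂ A]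
    (κ0 κ1 κinf θ1 θ2 t s c : ℂ) (x y a b : A) : A :=
  (t * (t - 1) * (t - s))⁻¹ •
    ((x * (a - algebraMap ℂ A t) + 1) *
        garnierNumerator κ0 κ1 κinf θ1 θ2 t s a (b - x * (algebraMap ℂ A c - y * x)) -
      (a - algebraMap ℂ A t) *
        regularizedQuadratic 1 (garnierQuartic t s) (garnierCubic κ0 κ1 θ1 θ2 t s)
          (garnierQuadratic κ0 κ1 κinf θ1 θ2 t s) c a x y)

theorem map_garnierPsiHamiltonian {A B : Type*} [CommRing A] [Algebra ℂ A] [CommRing B]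
    [Algebra ℂ B] (φ : A →ₐ[ℂ] B) (κ0 κ1 κinf θ1 θ2 t s c : ℂ) (x y a b : A) :
    φ (garnierPsiHamiltonian κ0 κ1 κinf θ1 θ2 t s c x y a b) =
      garnierPsiHamiltonian κ0 κ1 κinf θ1 θ2 t s c (φ x) (φ y) (φ a) (φ b) := by
  simp only [garnierPsiHamiltonian, garnierNumerator, map_smul, map_sub, map_mul, map_add, map_one,
    AlgHom.commutes, map_momentumQuadratic, map_regularizedQuadratic]

variable {κ0 κ1 κinf θ1 θ2 t s : ℂ}

theorem natDegree_garnierQuartic_le : (garnierQuartic t s).natDegree ≤ 4 := by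
  unfold garnierQuartic
  compute_degree

theorem coeff_four_garnierQuartic : (garnierQuartic t s).coeff 4 = 1 := by
  unfold garnierQuartic
  compute_degree!

theorem natDegree_garnierCubic_le : (garnierCubic κ0 κ1 θ1 θ2 t s).natDegree ≤ 3 := by
  unfold garnierCubic
  compute_degree

theorem coeff_three_garnierCubic :
    (garnierCubic κ0 κ1 θ1 θ2 t s).coeff 3 = κ0 + κ1 + θ1 + θ2 - 1 := by
  unfold garnierCubic
  compute_degree!
  ring

theorem natDegree_garnierQuadratic_le :
    (garnierQuadratic κ0 κ1 κinf θ1 θ2 t s).natDegree ≤ 2 := by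
  unfold garnierQuadratic
  compute_degree

theorem coeff_two_garnierQuadratic :
    (garnierQuadratic κ0 κ1 κinf θ1 θ2 t s).coeff 2 =
      ((κ0 + κ1 + θ1 + θ2 - 1) ^ 2 - κinf ^ 2) / 4 := by
  unfold garnierQuadratic
  compute_degree!

theorem mul_garnierB_eq_garnierNumerator {q : ℂ} (p : ℂ) (h0 : q ≠ 0) (h1 : q ≠ 1) (ht : q ≠ t)
    (hs : q ≠ s) :
    q * (q - 1) * (q - t) * (q - s) * garnierB κ0 κ1 κinf θ1 θ2 t s q p =
      garnierNumerator κ0 κ1 κinf θ1 θ2 t s q p := by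
  have h1' := sub_ne_zero.mpr h1
  have ht' := sub_ne_zero.mpr ht
  have hs' := sub_ne_zero.mpr hs
  simp only [garnierB, garnierNumerator, momentumQuadratic, garnierQuartic, garnierCubic,
    garnierQuadratic, coe_aeval_eq_eval, eval_add, eval_sub, eval_mul, eval_X, eval_C, eval_one]
  field_simp
  ring

theorem garnierH1_eq_garnierNumerator {q1 q2 : ℂ} (p1 p2 : ℂ)
    (h01 : q1 ≠ 0) (h11 : q1 ≠ 1) (ht1 : q1 ≠ t) (hs1 : q1 ≠ s)
    (h02 : q2 ≠ 0) (h12 : q2 ≠ 1) (ht2 : q2 ≠ t) (hs2 : q2 ≠ s) :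
    garnierH1 κ0 κ1 κinf θ1 θ2 q1 p1 q2 p2 t s =
      (t * (t - 1) * (t - s))⁻¹ * ((q2 - q1)⁻¹ *
        ((q2 - t) * garnierNumerator κ0 κ1 κinf θ1 θ2 t s q1 p1 -
          (q1 - t) * garnierNumerator κ0 κ1 κinf θ1 θ2 t s q2 p2)) := by
  have hinv : (q1 - q2)⁻¹ = -(q2 - q1)⁻¹ := by rw [← inv_neg, neg_sub]
  rw [← mul_garnierB_eq_garnierNumerator p1 h01 h11 ht1 hs1,
    ← mul_garnierB_eq_garnierNumerator p2 h02 h12 ht2 hs2]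
  simp only [garnierH1, div_eq_mul_inv, mul_inv, hinv]
  ring

variable {c x : ℂ}

theorem mul_garnierNumerator_add_inv
    (hc : c ^ 2 - (κ0 + κ1 + θ1 + θ2 - 1) * c +
      ((κ0 + κ1 + θ1 + θ2 - 1) ^ 2 - κinf ^ 2) / 4 = 0)
    (a y : ℂ) (hx : x ≠ 0) :
    x * garnierNumerator κ0 κ1 κinf θ1 θ2 t s (a + x⁻¹) (x * (c - y * x)) =
      regularizedQuadratic 1 (garnierQuartic t s) (garnierCubic κ0 κ1 θ1 θ2 t s)
        (garnierQuadratic κ0 κ1 κinf θ1 θ2 t s) c a x y := by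
  rw [← pow_mul_momentumQuadratic_add_inv natDegree_garnierQuartic_le natDegree_garnierCubic_le
    natDegree_garnierQuadratic_le _ a y hx, pow_one, garnierNumerator]
  rw [coeff_four_garnierQuartic, coeff_three_garnierCubic, coeff_two_garnierQuadratic, one_mul, hc]

theorem garnierH1_eq_garnierPsiHamiltonian {a : ℂ} (y b : ℂ)
    (hc : c ^ 2 - (κ0 + κ1 + θ1 + θ2 - 1) * c +
      ((κ0 + κ1 + θ1 + θ2 - 1) ^ 2 - κinf ^ 2) / 4 = 0)
    (hx : x ≠ 0) (h0 : a ≠ 0) (h1 : a ≠ 1) (ht : a ≠ t) (hs : a ≠ s)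
    (h0' : a + x⁻¹ ≠ 0) (h1' : a + x⁻¹ ≠ 1) (ht' : a + x⁻¹ ≠ t) (hs' : a + x⁻¹ ≠ s) :
    garnierH1 κ0 κ1 κinf θ1 θ2 a (b - x * (c - y * x)) (a + x⁻¹) (x * (c - y * x)) t s =
      garnierPsiHamiltonian κ0 κ1 κinf θ1 θ2 t s c x y a b := by
  rw [garnierH1_eq_garnierNumerator _ _ h0 h1 ht hs h0' h1' ht' hs', add_sub_cancel_left, inv_inv,
    garnierPsiHamiltonian, ← mul_garnierNumerator_add_inv hc a y hx]
  simp only [smul_eq_mul, Algebra.algebraMap_self, RingHom.id_apply]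
  congr 1
  linear_combination garnierNumerator κ0 κ1 κinf θ1 θ2 t s a (b - x * (c - y * x)) *
    mul_inv_cancel₀ hx

end Garnier

/-- φ1 makes the second Hamiltonian polynomial as well: for fixed `t, s ∉ {0,1}`
with `t ≠ s`, there is a polynomial `P` in four variables such that
`H2(ψ(Q1,P1,Q2,P2), t, s) = P(Q1,P1,Q2,P2)` on the indicated domain, where
`c = (κ0+κ1-κ∞+θ1+θ2-1)/2`. -/
theorem garnierH2_psi_polynomial (κ0 κ1 κinf θ1 θ2 t s : ℂ)
    (ht0 : t ≠ 0) (ht1 : t ≠ 1) (hs0 : s ≠ 0) (hs1 : s ≠ 1) (hts : t ≠ s) :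
    ∃ P : MvPolynomial (Fin 4) ℂ, ∀ Q1 P1 Q2 P2 : ℂ,
      Q1 ≠ 0 → Q2 ≠ 0 → Q2 ≠ 1 → Q2 ≠ t → Q2 ≠ s →
      Q2 + 1 / Q1 ≠ 0 → Q2 + 1 / Q1 ≠ 1 → Q2 + 1 / Q1 ≠ t → Q2 + 1 / Q1 ≠ s →
      garnierH2' κ0 κ1 κinf θ1 θ2
          (psi ((κ0 + κ1 - κinf + θ1 + θ2 - 1) / 2) (Q1, P1, Q2, P2)) t s =
        MvPolynomial.eval ![Q1, P1, Q2, P2] P := by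
  refine ⟨garnierPsiHamiltonian κ0 κ1 κinf θ2 θ1 s t ((κ0 + κ1 - κinf + θ1 + θ2 - 1) / 2)
    (MvPolynomial.X 0) (MvPolynomial.X 1) (MvPolynomial.X 2) (MvPolynomial.X 3), ?_⟩
  intro Q1 P1 Q2 P2 hQ1 h0 h1 ht hs h0' h1' ht' hs'
  rw [one_div] at h0' h1' ht' hs'
  rw [← MvPolynomial.coe_aeval_eq_eval, RingHom.coe_coe, map_garnierPsiHamiltonian]
  simp only [garnierH2', psi, one_div, MvPolynomial.aeval_X, Matrix.cons_val]
  exact garnierH1_eq_garnierPsiHamiltonian P1 P2 (by ring) hQ1 h0 h1 hs ht h0' h1' hs' ht'
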